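/- Let 1 < α ≤ 2 and J(r) = r^{-α}. For every ε ∈ (0,1) there exists β̄ > 0 such that for every β ≥ β̄ and every L ∈ ℕ one has ⟨σ₀⟩⁺_{β,L} ≥ 1 − ε and ⟨σ₀⟩⁻_{β,L} ≤ −(1 − ε). In particular, the plus and minus finite-volume magnetizations are uniformly separated at low temperature (phase transition for the one-dimensional long-range Ising model with polynomial decay exponent α ∈ (1,2]). -/

import Mathlib

noncomputable section

/-! Configurations in `Ω_L^+` (equal to `+1` off `[-L,L]`) are encoded by the finite set
`A ⊆ [-L,L]` of their minus sites, and configurations in `Ω_L^-` by the finite set of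
their plus sites. -/

/-- The spin configuration with plus boundary condition and minus sites `A`. -/
def spinP (A : Finset ℤ) (x : ℤ) : ℝ := if x ∈ A then -1 else 1

/-- The spin configuration with minus boundary condition and plus sites `A`. -/
def spinM (A : Finset ℤ) (x : ℤ) : ℝ := if x ∈ A then 1 else -1

/-- The Hamiltonian `H_J(σ) = ∑_{x<y} |x−y|^{-α} (1 − σ_x σ_y)`, as a `tsum` over pairs. -/
def hamJ (α : ℝ) (σ : ℤ → ℝ) : ℝ :=
  ∑' p : ℤ × ℤ, if p.1 < p.2 then |(p.1 : ℝ) - (p.2 : ℝ)| ^ (-α) * (1 - σ p.1 * σ p.2) else 0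

/-- Subsets of the box `[-L, L]`. -/
def box (L : ℕ) : Finset (Finset ℤ) := (Finset.Icc (-(L : ℤ)) (L : ℤ)).powerset

/-- The finite-volume Gibbs expectation `⟨σ₀⟩⁺_{β,L}`. -/
def avgP (α β : ℝ) (L : ℕ) : ℝ :=
  (∑ A ∈ box L, spinP A 0 * Real.exp (-β * hamJ α (spinP A))) /
    ∑ A ∈ box L, Real.exp (-β * hamJ α (spinP A))

/-- The finite-volume Gibbs expectation `⟨σ₀⟩⁻_{β,L}`. -/
def avgM (α β : ℝ) (L : ℕ) : ℝ :=
  (∑ A ∈ box L, spinM A 0 * Real.exp (-β * hamJ α (spinM A))) /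
    ∑ A ∈ box L, Real.exp (-β * hamJ α (spinM A))

/-- Expectation of `f` under independent percolation on the finite set `F`, where `e` is open
with probability `p e`. -/
def bernE {E : Type*} [DecidableEq E] (p : E → ℝ) (F : Finset E) (f : Finset E → ℝ) : ℝ :=
  ∑ ω ∈ F.powerset, ((∏ e ∈ ω, p e) * ∏ e ∈ F \ ω, (1 - p e)) * f ω

open Classical in
/-- Probability of the event `Q` under independent percolation on `F`. -/
def bernP {E : Type*} [DecidableEq E] (p : E → ℝ) (F : Finset E) (Q : Finset E → Prop) : ℝ :=
  bernE p F (fun ω => if Q ω then 1 else 0)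

section Bernoulli

variable {E : Type*} [DecidableEq E] {p : E → ℝ}

lemma prod_eq_bernE (p a : E → ℝ) (F : Finset E) :
    ∏ e ∈ F, (p e * a e + (1 - p e)) = bernE p F (fun ω => ∏ e ∈ ω, a e) := by
  rw [Finset.prod_add, bernE]
  refine Finset.sum_congr rfl fun ω _ => ?_
  rw [Finset.prod_mul_distrib]
  ring

lemma bernE_empty (f : Finset E → ℝ) : bernE p ∅ f = f ∅ := by
  simp [bernE]

lemma bernE_insert {e : E} {F : Finset E} (he : e ∉ F) (f : Finset E → ℝ) :
    bernE p (insert e F) f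
      = (1 - p e) * bernE p F f + p e * bernE p F (fun ω => f (insert e ω)) := by
  unfold bernE
  rw [Finset.sum_powerset_insert he, Finset.mul_sum, Finset.mul_sum]
  congr 1 <;> refine Finset.sum_congr rfl fun ω hω => ?_
  · have h : e ∉ ω := fun h => he (Finset.mem_powerset.1 hω h)
    rw [Finset.insert_sdiff_of_notMem _ h, Finset.prod_insert (by simp [he])]
    ring
  · have h : e ∉ ω := fun h => he (Finset.mem_powerset.1 hω h)
    rw [Finset.prod_insert h, Finset.insert_sdiff_insert, Finset.sdiff_insert_of_notMem he]
    ring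

lemma bernE_add (F : Finset E) (f g : Finset E → ℝ) :
    bernE p F (fun ω => f ω + g ω) = bernE p F f + bernE p F g := by
  simp [bernE, mul_add, Finset.sum_add_distrib]

lemma bernE_mul_const (F : Finset E) (f : Finset E → ℝ) (c : ℝ) :
    bernE p F (fun ω => f ω * c) = bernE p F f * c := by
  simp [bernE, Finset.sum_mul, mul_assoc]

lemma bernE_sum {ι : Type*} (s : Finset ι) (F : Finset E) (f : ι → Finset E → ℝ) :
    bernE p F (fun ω => ∑ i ∈ s, f i ω) = ∑ i ∈ s, bernE p F (f i) := by
  simp only [bernE, Finset.mul_sum]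
  exact Finset.sum_comm

lemma bernE_const (F : Finset E) (c : ℝ) : bernE p F (fun _ => c) = c := by
  have h := prod_eq_bernE p (fun _ => 1) F
  have h2 := bernE_mul_const (p := p) F (fun _ => 1) c
  simp at h h2
  rw [h2, ← h, one_mul]

lemma bernE_mono (hp0 : ∀ e, 0 ≤ p e) (hp1 : ∀ e, p e ≤ 1) {F : Finset E}
    {f g : Finset E → ℝ} (h : ∀ ω ⊆ F, f ω ≤ g ω) : bernE p F f ≤ bernE p F g := by
  refine Finset.sum_le_sum fun ω hω => mul_le_mul_of_nonneg_left (h ω (Finset.mem_powerset.1 hω)) ?_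
  exact mul_nonneg (Finset.prod_nonneg fun e _ => hp0 e)
    (Finset.prod_nonneg fun e _ => sub_nonneg.2 (hp1 e))

lemma bernE_union {F G : Finset E} (h : Disjoint F G) (f : Finset E → ℝ) :
    bernE p (F ∪ G) f = bernE p F (fun ω => bernE p G (fun η => f (ω ∪ η))) := by
  induction G using Finset.induction_on generalizing f with
  | empty => simp [bernE_empty]
  | insert e G he ih =>
    rw [Finset.disjoint_insert_right] at h
    rw [Finset.union_insert, bernE_insert (by simp [h.1, he]), ih h.2, ih h.2]
    simp only [bernE_insert he, bernE_add, Finset.union_insert]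
    simp only [mul_comm (1 - p e), mul_comm (p e), bernE_mul_const]

/-- Harris' inequality. -/
lemma bernE_mul_le (hp0 : ∀ e, 0 ≤ p e) (hp1 : ∀ e, p e ≤ 1) (F : Finset E)
    {f g : Finset E → ℝ} (hf : Monotone f) (hg : Monotone g) :
    bernE p F f * bernE p F g ≤ bernE p F (fun ω => f ω * g ω) := by
  induction F using Finset.induction_on generalizing f g with
  | empty => simp [bernE_empty]
  | insert e F he ih =>
    have hi : Monotone (fun ω : Finset E => insert e ω) :=
      fun _ _ h => Finset.insert_subset_insert e h
    rw [bernE_insert he, bernE_insert he, bernE_insert he]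
    have h0 := ih hf hg
    have h1 := ih (hf.comp hi) (hg.comp hi)
    have hf' : bernE p F f ≤ bernE p F (fun ω => f (insert e ω)) :=
      bernE_mono hp0 hp1 fun ω _ => hf (Finset.subset_insert e ω)
    have hg' : bernE p F g ≤ bernE p F (fun ω => g (insert e ω)) :=
      bernE_mono hp0 hp1 fun ω _ => hg (Finset.subset_insert e ω)
    simp only [Function.comp_def] at h1
    have a0 := mul_le_mul_of_nonneg_left h0 (sub_nonneg.2 (hp1 e))
    have a1 := mul_le_mul_of_nonneg_left h1 (hp0 e)
    have a2 := mul_nonneg (mul_nonneg (hp0 e) (sub_nonneg.2 (hp1 e)))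
      (mul_nonneg (sub_nonneg.2 hf') (sub_nonneg.2 hg'))
    linarith

lemma bernP_mono (hp0 : ∀ e, 0 ≤ p e) (hp1 : ∀ e, p e ≤ 1) {F : Finset E}
    {Q R : Finset E → Prop} (h : ∀ ω ⊆ F, Q ω → R ω) : bernP p F Q ≤ bernP p F R := by
  refine bernE_mono hp0 hp1 fun ω hω => ?_
  by_cases hQ : Q ω
  · simp [hQ, h ω hω hQ]
  · simp only [hQ, if_false]
    split_ifs <;> norm_num

lemma bernP_not (F : Finset E) (Q : Finset E → Prop) :
    bernP p F Q = 1 - bernP p F (fun ω => ¬ Q ω) := by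
  rw [eq_sub_iff_add_eq, bernP, bernP, ← bernE_add]
  convert bernE_const (p := p) F 1 using 3 with ω
  by_cases hQ : Q ω <;> simp [hQ]

lemma bernP_or_le (hp0 : ∀ e, 0 ≤ p e) (hp1 : ∀ e, p e ≤ 1) (F : Finset E)
    (Q R : Finset E → Prop) :
    bernP p F (fun ω => Q ω ∨ R ω) ≤ bernP p F Q + bernP p F R := by
  unfold bernP
  rw [← bernE_add]
  refine bernE_mono hp0 hp1 fun ω _ => ?_
  by_cases hQ : Q ω <;> by_cases hR : R ω <;> simp [hQ, hR]

lemma bernP_exists_le (hp0 : ∀ e, 0 ≤ p e) (hp1 : ∀ e, p e ≤ 1) {ι : Type*} (s : Finset ι)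
    (F : Finset E) (Q : ι → Finset E → Prop) {c : ℝ} (h : ∀ i ∈ s, bernP p F (Q i) ≤ c) :
    bernP p F (fun ω => ∃ i ∈ s, Q i ω) ≤ s.card * c := by
  classical
  calc bernP p F (fun ω => ∃ i ∈ s, Q i ω)
      ≤ bernE p F (fun ω => ∑ i ∈ s, if Q i ω then 1 else 0) := by
        refine bernE_mono hp0 hp1 fun ω _ => ?_
        have h0 : ∀ i ∈ s, (0 : ℝ) ≤ if Q i ω then 1 else 0 := by
          intro i _
          split_ifs <;> norm_num
        split_ifs with hQ
        · obtain ⟨i, hi, hQ⟩ := hQ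
          have := Finset.single_le_sum h0 hi
          simpa [hQ] using this
        · exact Finset.sum_nonneg h0
    _ = ∑ i ∈ s, bernP p F (Q i) := by
        rw [bernE_sum]
        refine Finset.sum_congr rfl fun i _ => ?_
        unfold bernP
        congr!
    _ ≤ s.card * c := by
        rw [← nsmul_eq_mul]
        exact Finset.sum_le_card_nsmul s _ c h

/-- If `Q` forces `R` outside `S`, and conditionally on the configuration outside `S` it has
probability at most `κ`, then its probability is at most `κ` times that of `R`. -/
lemma bernP_le_mul (hp0 : ∀ e, 0 ≤ p e) (hp1 : ∀ e, p e ≤ 1) {F S : Finset E} (hS : S ⊆ F)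
    {Q R : Finset E → Prop} {κ : ℝ}
    (h1 : ∀ ω ⊆ F \ S, ∀ η ⊆ S, Q (ω ∪ η) → R ω)
    (h2 : ∀ ω ⊆ F \ S, R ω → bernP p S (fun η => Q (ω ∪ η)) ≤ κ) :
    bernP p F Q ≤ κ * bernP p (F \ S) R := by
  have hF : F = F \ S ∪ S := (Finset.sdiff_union_of_subset hS).symm
  rw [bernP, hF, bernE_union Finset.sdiff_disjoint, ← hF, mul_comm, bernP, ← bernE_mul_const]
  refine bernE_mono hp0 hp1 fun ω hω => ?_
  by_cases hR : R ω
  · simp only [hR, if_true, one_mul]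
    exact h2 ω hω hR
  · simp only [hR, if_false, zero_mul]
    refine (bernE_mono hp0 hp1 fun η hη => ?_).trans_eq (bernE_const (p := p) S 0)
    rw [if_neg fun hQ => hR (h1 ω hω η hη hQ)]

lemma bernP_disjoint {F Z : Finset E} (hZ : Z ⊆ F) :
    bernP p F (fun ω => Disjoint ω Z) = ∏ e ∈ Z, (1 - p e) := by
  classical
  have h := prod_eq_bernE p (fun e => if e ∉ Z then 1 else 0) F
  simp only [Finset.prod_ite_zero, Finset.prod_const_one, ← Finset.disjoint_left] at h
  rw [bernP]
  convert h.symm using 1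
  · congr!
  · rw [← Finset.prod_subset hZ]
    · exact Finset.prod_congr rfl fun e he => by simp [he]
    · intro e _ he
      simp [he]

end Bernoulli

section RandomCluster

/-- `A` does not separate the endpoints of any edge of `ω`. -/
def Compat (ω : Finset (ℤ × ℤ)) (A : Finset ℤ) : Prop := ∀ e ∈ ω, (e.1 ∈ A ↔ e.2 ∈ A)

instance (ω : Finset (ℤ × ℤ)) (A : Finset ℤ) : Decidable (Compat ω A) := by
  unfold Compat
  infer_instance

lemma Compat.symmDiff {ω : Finset (ℤ × ℤ)} {A B : Finset ℤ} (hA : Compat ω A)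
    (hB : Compat ω B) : Compat ω (symmDiff A B) := by
  intro e he
  simp only [Finset.mem_symmDiff, hA e he, hB e he]

lemma symmDiff_mem_box {L : ℕ} {A B : Finset ℤ} (hA : A ∈ box L) (hB : B ∈ box L) :
    symmDiff A B ∈ box L := by
  rw [box, Finset.mem_powerset] at *
  exact Finset.union_subset (Finset.sdiff_subset.trans hA) (Finset.sdiff_subset.trans hB)

/-- The number of minus sets in the box that are compatible with `ω`, times `2 ^ |ω|`. -/
def clusterWeight (L : ℕ) (ω : Finset (ℤ × ℤ)) : ℝ :=
  ∑ A ∈ box L, ∏ e ∈ ω, 2 * (if e.1 ∈ A ↔ e.2 ∈ A then (1 : ℝ) else 0)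

lemma prod_compat (ω : Finset (ℤ × ℤ)) (A : Finset ℤ) :
    ∏ e ∈ ω, 2 * (if e.1 ∈ A ↔ e.2 ∈ A then (1 : ℝ) else 0)
      = 2 ^ ω.card * if Compat ω A then 1 else 0 := by
  rw [Finset.prod_mul_distrib, Finset.prod_const, Finset.prod_ite_zero, Finset.prod_const_one]
  rfl

lemma clusterWeight_eq (L : ℕ) (ω : Finset (ℤ × ℤ)) :
    clusterWeight L ω = 2 ^ ω.card * ((box L).filter (Compat ω)).card := by
  simp only [clusterWeight, prod_compat, ← Finset.mul_sum, Finset.sum_boole]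

lemma clusterWeight_mono (L : ℕ) : Monotone (clusterWeight L) := by
  rw [Finset.monotone_iff_forall_le_insert]
  intro ω e he
  rw [clusterWeight_eq, clusterWeight_eq, Finset.card_insert_of_notMem he, pow_succ, mul_assoc]
  refine mul_le_mul_of_nonneg_left ?_ (by positivity)
  set S := (box L).filter (Compat ω)
  set T := (box L).filter (Compat (insert e ω))
  have hTS : T ⊆ S := by
    intro A hA
    rw [Finset.mem_filter] at hA ⊢
    exact ⟨hA.1, fun e' he' => hA.2 e' (Finset.mem_insert_of_mem he')⟩
  have hsplit : ∀ A ∈ S \ T, A ∈ box L ∧ Compat ω A ∧ ¬ (e.1 ∈ A ↔ e.2 ∈ A) := by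
    intro A hA
    rw [Finset.mem_sdiff, Finset.mem_filter, Finset.mem_filter] at hA
    refine ⟨hA.1.1, hA.1.2, fun h => hA.2 ⟨hA.1.1, ?_⟩⟩
    intro e' he'
    rcases Finset.mem_insert.1 he' with rfl | he'
    · exact h
    · exact hA.1.2 e' he'
  have hcard : (S \ T).card ≤ T.card := by
    rcases (S \ T).eq_empty_or_nonempty with h0 | ⟨B, hB⟩
    · simp [h0]
    refine Finset.card_le_card_of_injOn (fun A => symmDiff A B) ?_
      (fun _ _ _ _ h => symmDiff_left_injective B h)
    intro A hA
    obtain ⟨hA1, hA2, hA3⟩ := hsplit A hA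
    obtain ⟨hB1, hB2, hB3⟩ := hsplit B hB
    refine Finset.mem_coe.2 (Finset.mem_filter.2 ⟨symmDiff_mem_box hA1 hB1, ?_⟩)
    intro e' he'
    rcases Finset.mem_insert.1 he' with rfl | he'
    · simp only [Finset.mem_symmDiff]
      tauto
    · exact hA2.symmDiff hB2 e' he'
  have := Finset.card_sdiff_add_card_eq_card hTS
  have h2 : S.card ≤ 2 * T.card := by omega
  exact_mod_cast h2

/-- In the configuration `ω` the origin is connected to the complement of `[-L, L]`. -/
def PlusAtZero (L : ℕ) (ω : Finset (ℤ × ℤ)) : Prop := ∀ A ∈ box L, Compat ω A → (0 : ℤ) ∉ A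

open Classical in
lemma sum_spinP_compat (L : ℕ) (ω : Finset (ℤ × ℤ)) :
    ∑ A ∈ box L, spinP A 0 * ∏ e ∈ ω, 2 * (if e.1 ∈ A ↔ e.2 ∈ A then (1 : ℝ) else 0)
      = (if PlusAtZero L ω then 1 else 0) * clusterWeight L ω := by
  simp only [clusterWeight, prod_compat]
  split_ifs with h
  · rw [one_mul]
    refine Finset.sum_congr rfl fun A hA => ?_
    by_cases hc : Compat ω A
    · simp [spinP, h A hA hc]
    · simp [hc]
  · rw [zero_mul]
    simp only [PlusAtZero, not_forall, not_not] at h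
    obtain ⟨B, hB, hBc, hB0⟩ := h
    refine Finset.sum_involution (fun A _ => symmDiff A B) ?_ ?_
      (fun A hA => symmDiff_mem_box hA hB) (fun A _ => symmDiff_symmDiff_cancel_right B A)
    · intro A hA
      have h1 : Compat ω (symmDiff A B) ↔ Compat ω A := by
        refine ⟨fun h => ?_, fun h => h.symmDiff hBc⟩
        have := h.symmDiff hBc
        rwa [symmDiff_symmDiff_cancel_right] at this
      have h2 : spinP (symmDiff A B) 0 = - spinP A 0 := by
        by_cases hA0 : (0 : ℤ) ∈ A <;> simp [spinP, Finset.mem_symmDiff, hA0, hB0]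
      simp only [h1, h2]
      ring
    · intro A _ _ hAB
      have : B = ⊥ := by simpa using hAB
      simp [this] at hB0

open Classical in
lemma plusAtZero_mono (L : ℕ) :
    Monotone (fun ω => if PlusAtZero L ω then (1 : ℝ) else 0) := by
  intro ω η h
  have : PlusAtZero L ω → PlusAtZero L η :=
    fun hω A hA hc => hω A hA fun e he => hc e (h he)
  by_cases h1 : PlusAtZero L ω
  · simp [h1, this h1]
  · simp only [h1, if_false]
    split_ifs <;> norm_num

/-- The random-cluster representation compared with independent percolation: the truncated
plus-boundary magnetization dominates a connection probability. -/
lemma bernP_le_magnetization {t p : ℤ × ℤ → ℝ} (ht : ∀ e, 0 ≤ t e)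
    (hp : ∀ e, p e = (1 - t e) / (1 + t e)) (hp0 : ∀ e, 0 ≤ p e) (hp1 : ∀ e, p e ≤ 1)
    (L : ℕ) (F : Finset (ℤ × ℤ)) :
    bernP p F (PlusAtZero L) *
        ∑ A ∈ box L, ∏ e ∈ F, (if e.1 ∈ A ↔ e.2 ∈ A then 1 else t e)
      ≤ ∑ A ∈ box L, spinP A 0 * ∏ e ∈ F, (if e.1 ∈ A ↔ e.2 ∈ A then 1 else t e) := by
  have hfac : ∀ A : Finset ℤ, ∏ e ∈ F, (if e.1 ∈ A ↔ e.2 ∈ A then 1 else t e)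
      = (∏ e ∈ F, ((1 + t e) / 2)) * bernE p F
        (fun ω => ∏ e ∈ ω, 2 * (if e.1 ∈ A ↔ e.2 ∈ A then (1 : ℝ) else 0)) := by
    intro A
    rw [← prod_eq_bernE, ← Finset.prod_mul_distrib]
    refine Finset.prod_congr rfl fun e _ => ?_
    have : 1 + t e ≠ 0 := by linarith [ht e]
    rw [hp]
    split_ifs
    · field_simp
      ring
    · field_simp
      ring
  have hZ : ∑ A ∈ box L, ∏ e ∈ F, (if e.1 ∈ A ↔ e.2 ∈ A then 1 else t e)
      = (∏ e ∈ F, ((1 + t e) / 2)) * bernE p F (clusterWeight L) := by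
    simp only [hfac, ← Finset.mul_sum, ← bernE_sum]
    rfl
  have hN : ∑ A ∈ box L, spinP A 0 * ∏ e ∈ F, (if e.1 ∈ A ↔ e.2 ∈ A then 1 else t e)
      = (∏ e ∈ F, ((1 + t e) / 2)) * bernE p F
        (fun ω => (open Classical in if PlusAtZero L ω then 1 else 0) * clusterWeight L ω) := by
    simp only [hfac, ← sum_spinP_compat, bernE_sum, Finset.mul_sum]
    refine Finset.sum_congr rfl fun A _ => ?_
    simp only [mul_comm (spinP A 0), bernE_mul_const]
    ring
  rw [hZ, hN, ← mul_assoc, mul_comm (bernP _ _ _), mul_assoc]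
  refine mul_le_mul_of_nonneg_left ?_ (Finset.prod_nonneg fun e _ => by linarith [ht e])
  exact bernE_mul_le hp0 hp1 F (plusAtZero_mono L) (clusterWeight_mono L)

end RandomCluster

section Truncation

/-- The coupling of the pair `e`, counted only when `e.1 < e.2`. -/
def coupling (α : ℝ) (e : ℤ × ℤ) : ℝ :=
  if e.1 < e.2 then |(e.1 : ℝ) - (e.2 : ℝ)| ^ (-α) else 0

lemma coupling_nonneg (α : ℝ) (e : ℤ × ℤ) : 0 ≤ coupling α e := by
  unfold coupling
  split_ifs <;> positivity

lemma summable_coupling_mul_spin {α : ℝ} (hα : 1 < α) (A : Finset ℤ) :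
    Summable fun e : ℤ × ℤ => coupling α e * (if e.1 ∈ A ↔ e.2 ∈ A then 0 else 2) := by
  have hs : Summable fun n : ℤ => |(n : ℝ)| ^ (-α) := Real.summable_abs_int_rpow hα
  have h1 : ∀ a : ℤ, Summable fun e : ℤ × ℤ =>
      if e.1 = a then |((e.1 - e.2 : ℤ) : ℝ)| ^ (-α) else 0 := by
    intro a
    have hi : Function.Injective fun n : ℤ => ((a, a - n) : ℤ × ℤ) := by
      intro m n h
      simpa using h
    rw [← hi.summable_iff]
    · simpa [Function.comp_def] using hs
    · rintro ⟨x, y⟩ hx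
      rw [if_neg]
      rintro rfl
      exact hx ⟨x - y, by simp⟩
  have h2 : ∀ a : ℤ, Summable fun e : ℤ × ℤ =>
      if e.2 = a then |((e.1 - e.2 : ℤ) : ℝ)| ^ (-α) else 0 := by
    intro a
    have hi : Function.Injective fun n : ℤ => ((a + n, a) : ℤ × ℤ) := by
      intro m n h
      simpa using h
    rw [← hi.summable_iff]
    · simpa [Function.comp_def] using hs
    · rintro ⟨x, y⟩ hx
      rw [if_neg]
      rintro rfl
      exact hx ⟨x - y, by simp⟩
  have h3 := (summable_sum (s := A) fun a _ => (h1 a).add (h2 a)).mul_left 2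
  refine Summable.of_nonneg_of_le (fun e => ?_) (fun e => ?_) h3
  · refine mul_nonneg (coupling_nonneg α e) ?_
    split_ifs <;> norm_num
  · have hc : coupling α e ≤ |((e.1 - e.2 : ℤ) : ℝ)| ^ (-α) := by
      unfold coupling
      split_ifs
      · push_cast
        exact le_rfl
      · positivity
    have hr : (0 : ℝ) ≤ |((e.1 - e.2 : ℤ) : ℝ)| ^ (-α) := by positivity
    simp only [Finset.sum_add_distrib, Finset.sum_ite_eq]
    generalize |((e.1 - e.2 : ℤ) : ℝ)| ^ (-α) = r at hc hr ⊢
    by_cases ha : e.1 ∈ A <;> by_cases hb : e.2 ∈ A <;> simp [ha, hb] <;> linarith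

lemma hamJ_spinP (α : ℝ) (A : Finset ℤ) :
    hamJ α (spinP A) = ∑' e : ℤ × ℤ, coupling α e * (if e.1 ∈ A ↔ e.2 ∈ A then 0 else 2) := by
  unfold hamJ
  congr 1
  ext e
  unfold coupling spinP
  by_cases ha : e.1 ∈ A <;> by_cases hb : e.2 ∈ A <;> simp [ha, hb] <;> norm_num

lemma hamJ_spinM (α : ℝ) (A : Finset ℤ) : hamJ α (spinM A) = hamJ α (spinP A) := by
  unfold hamJ
  congr 1
  ext e
  unfold spinM spinP
  by_cases ha : e.1 ∈ A <;> by_cases hb : e.2 ∈ A <;> simp [ha, hb]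

lemma avgM_eq_neg (α β : ℝ) (L : ℕ) : avgM α β L = - avgP α β L := by
  have h : ∀ A : Finset ℤ, spinM A 0 = - spinP A 0 := by
    intro A
    by_cases h : (0 : ℤ) ∈ A <;> simp [spinM, spinP, h]
  simp only [avgM, avgP, hamJ_spinM, h, neg_mul, Finset.sum_neg_distrib, neg_div]

lemma tendsto_truncated_weight {α : ℝ} (hα : 1 < α) (β : ℝ) (A : Finset ℤ) :
    Filter.Tendsto (fun F : Finset (ℤ × ℤ) => ∏ e ∈ F,
        (if e.1 ∈ A ↔ e.2 ∈ A then 1 else Real.exp (-2 * β * coupling α e)))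
      Filter.atTop (nhds (Real.exp (-β * hamJ α (spinP A)))) := by
  have h := (summable_coupling_mul_spin hα A).hasSum
  rw [← hamJ_spinP] at h
  refine ((Real.continuous_exp.tendsto _).comp (h.const_mul (-β))).congr fun F => ?_
  simp only [Function.comp_apply]
  rw [Finset.mul_sum, Real.exp_sum]
  refine Finset.prod_congr rfl fun e _ => ?_
  split_ifs
  · simp
  · congr 1
    ring

/-- The percolation density used to bound the magnetization at inverse temperature `β`. -/
def openProb (α β : ℝ) (e : ℤ × ℤ) : ℝ :=
  (1 - Real.exp (-2 * β * coupling α e)) / (1 + Real.exp (-2 * β * coupling α e))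

lemma openProb_nonneg {α β : ℝ} (hβ : 0 ≤ β) (e : ℤ × ℤ) : 0 ≤ openProb α β e := by
  have h : Real.exp (-2 * β * coupling α e) ≤ 1 := by
    rw [Real.exp_le_one_iff]
    have := mul_nonneg hβ (coupling_nonneg α e)
    linarith
  exact div_nonneg (sub_nonneg.2 h) (by positivity)

lemma openProb_le_one (α β : ℝ) (e : ℤ × ℤ) : openProb α β e ≤ 1 := by
  rw [openProb, div_le_one (by positivity)]
  linarith [Real.exp_pos (-2 * β * coupling α e)]

lemma one_sub_openProb_le {α β : ℝ} (hα : α ≤ 2) (hβ : 0 ≤ β) {e : ℤ × ℤ} (he : e.1 < e.2) :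
    1 - openProb α β e ≤ Real.exp (-(β * (1 / ((e.2 : ℝ) - e.1) ^ 2))) := by
  have h1 : (1 : ℝ) ≤ (e.2 : ℝ) - e.1 := by
    have : (1 : ℤ) ≤ e.2 - e.1 := by omega
    exact_mod_cast this
  have hc : 1 / ((e.2 : ℝ) - e.1) ^ 2 ≤ coupling α e := by
    rw [coupling, if_pos he, abs_sub_comm, abs_of_pos (by linarith), one_div,
      ← Real.rpow_natCast, ← Real.rpow_neg (by linarith)]
    exact Real.rpow_le_rpow_of_exponent_le h1 (by push_cast; linarith)
  have h2 : 1 - openProb α β e ≤ Real.exp (-(β * coupling α e)) := by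
    have hs : Real.exp (-2 * β * coupling α e) = Real.exp (-(β * coupling α e)) ^ 2 := by
      rw [← Real.exp_nat_mul]
      congr 1
      push_cast
      ring
    rw [openProb, hs]
    set s := Real.exp (-(β * coupling α e))
    have hs0 : 0 < s := Real.exp_pos _
    rw [one_sub_div (by positivity), div_le_iff₀ (by positivity)]
    nlinarith [mul_nonneg hs0.le (sq_nonneg (s - 1))]
  refine h2.trans (Real.exp_le_exp.2 (neg_le_neg ?_))
  exact mul_le_mul_of_nonneg_left hc hβ

lemma le_avgP_of_bernP {α β c : ℝ} (hα : 1 < α) (hβ : 0 ≤ β) (L : ℕ) (F₀ : Finset (ℤ × ℤ))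
    (h : ∀ F, F₀ ⊆ F → c ≤ bernP (openProb α β) F (PlusAtZero L)) : c ≤ avgP α β L := by
  have hZ := tendsto_finsetSum (box L) fun A _ => tendsto_truncated_weight hα β A
  have hN := tendsto_finsetSum (box L) fun A _ =>
    (tendsto_truncated_weight hα β A).const_mul (spinP A 0)
  have hne : (box L).Nonempty := ⟨∅, by simp [box]⟩
  have hpos : 0 < ∑ A ∈ box L, Real.exp (-β * hamJ α (spinP A)) :=
    Finset.sum_pos (fun _ _ => Real.exp_pos _) hne
  rw [avgP, le_div_iff₀ hpos]
  refine le_of_tendsto_of_tendsto (hZ.const_mul c) hN ?_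
  filter_upwards [Filter.eventually_ge_atTop F₀] with F hF
  refine le_trans (mul_le_mul_of_nonneg_right (h F hF) ?_)
    (bernP_le_magnetization (fun e => (Real.exp_pos _).le) (fun e => rfl)
      (openProb_nonneg hβ) (openProb_le_one α β) L F)
  refine Finset.sum_nonneg fun A _ => Finset.prod_nonneg fun e _ => ?_
  split_ifs <;> positivity

end Truncation

section Blocks

open Finset

/-- All points of `A` are joined by `ω`: every set not separated by an edge of `ω` contains all
of `A` or none of it. -/
def Rigid (ω : Finset (ℤ × ℤ)) (A : Finset ℤ) : Prop :=
  ∀ s : Set ℤ, (∀ e ∈ ω, e.1 ∈ s ↔ e.2 ∈ s) → ∀ x ∈ A, ∀ y ∈ A, x ∈ s ↔ y ∈ s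

lemma Rigid.mono {ω η : Finset (ℤ × ℤ)} {A : Finset ℤ} (h : Rigid ω A) (hωη : ω ⊆ η) :
    Rigid η A :=
  fun s hs => h s fun e he => hs e (hωη he)

lemma Rigid.union {ω : Finset (ℤ × ℤ)} {A B : Finset ℤ} (hA : Rigid ω A) (hB : Rigid ω B)
    (h : (A ∩ B).Nonempty) : Rigid ω (A ∪ B) := by
  obtain ⟨z, hz⟩ := h
  rw [mem_inter] at hz
  have key : ∀ s : Set ℤ, (∀ e ∈ ω, e.1 ∈ s ↔ e.2 ∈ s) → ∀ x ∈ A ∪ B, x ∈ s ↔ z ∈ s := by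
    intro s hs x hx
    rcases mem_union.1 hx with hx | hx
    · exact hA s hs x hx z hz.1
    · exact hB s hs x hx z hz.2
  exact fun s hs x hx y hy => (key s hs x hx).trans (key s hs y hy).symm

lemma Rigid.union_of_edge {ω : Finset (ℤ × ℤ)} {A B : Finset ℤ} (hA : Rigid ω A)
    (hB : Rigid ω B) {x y : ℤ} (hx : x ∈ A) (hy : y ∈ B) (h : (x, y) ∈ ω) :
    Rigid ω (A ∪ B) := by
  have hxy : Rigid ω {x, y} := by
    intro s hs u hu v hv
    have := hs _ h
    simp only [mem_insert, mem_singleton] at hu hv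
    rcases hu with rfl | rfl <;> rcases hv with rfl | rfl <;> tauto
  have h1 := (hA.union hxy ⟨x, by simp [hx]⟩).union hB ⟨y, by simp [hy]⟩
  exact fun s hs u hu v hv => h1 s hs u (by simp only [mem_union] at hu ⊢; tauto) v
    (by simp only [mem_union] at hv ⊢; tauto)

lemma rigid_biUnion {ω : Finset (ℤ × ℤ)} {A : ℕ → Finset ℤ} {lo hi : ℕ}
    (hA : ∀ j, lo ≤ j → j < hi → Rigid ω (A j))
    (hn : ∀ j, lo ≤ j → j + 1 < hi → (A j ∩ A (j + 1)).Nonempty) :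
    Rigid ω ((Ico lo hi).biUnion A) := by
  induction hi with
  | zero =>
    intro s _ x hx
    simp at hx
  | succ n ih =>
    have ih := ih (fun j h1 h2 => hA j h1 (by omega)) (fun j h1 h2 => hn j h1 (by omega))
    rcases lt_trichotomy lo n with h | h | h
    · obtain ⟨z, hz⟩ := hn (n - 1) (by omega) (by omega)
      rw [Nat.sub_add_cancel (by omega), mem_inter] at hz
      have hI : (Ico lo (n + 1)).biUnion A = (Ico lo n).biUnion A ∪ A n := by
        ext x
        simp only [mem_biUnion, mem_Ico, mem_union]
        constructor
        · rintro ⟨j, hj, hx⟩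
          rcases eq_or_ne j n with rfl | hjn
          · exact Or.inr hx
          · exact Or.inl ⟨j, ⟨hj.1, by omega⟩, hx⟩
        · rintro (⟨j, hj, hx⟩ | hx)
          · exact ⟨j, ⟨hj.1, by omega⟩, hx⟩
          · exact ⟨n, ⟨h.le, by omega⟩, hx⟩
      rw [hI]
      refine ih.union (hA n h.le (by omega)) ⟨z, ?_⟩
      rw [mem_inter, mem_biUnion]
      exact ⟨⟨n - 1, by rw [mem_Ico]; omega, hz.1⟩, hz.2⟩
    · subst h
      simpa using hA lo le_rfl (by omega)
    · rw [Ico_eq_empty (by omega)]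
      intro s _ x hx
      simp at hx

/-- The pairs of sites of `[a, a + K)`. -/
def edgesIn (a : ℤ) (K : ℕ) : Finset (ℤ × ℤ) := Ico a (a + K) ×ˢ Ico a (a + K)

lemma mem_edgesIn {a : ℤ} {K : ℕ} {e : ℤ × ℤ} :
    e ∈ edgesIn a K ↔ (a ≤ e.1 ∧ e.1 < a + K) ∧ a ≤ e.2 ∧ e.2 < a + K := by
  simp [edgesIn]

/-- `A` is an `ω`-connected subset of density at least `θ` in `[a, a + K)`. -/
def IsCluster (θ : ℝ) (a : ℤ) (K : ℕ) (ω : Finset (ℤ × ℤ)) (A : Finset ℤ) : Prop :=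
  A ⊆ Ico a (a + K) ∧ θ * K ≤ A.card ∧ Rigid ω A

/-- The open edges inside `[a, a + K)` connect a subset of density at least `θ`. -/
def Good (θ : ℝ) (a : ℤ) (K : ℕ) (ω : Finset (ℤ × ℤ)) : Prop :=
  ∃ A, IsCluster θ a K (ω ∩ edgesIn a K) A

lemma Good.mono {θ : ℝ} {a : ℤ} {K : ℕ} {ω η : Finset (ℤ × ℤ)} (h : Good θ a K ω)
    (hωη : ω ⊆ η) : Good θ a K η := by
  obtain ⟨A, h1, h2, h3⟩ := h
  exact ⟨A, h1, h2, h3.mono (inter_subset_inter_right hωη)⟩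

/-- The sub-block number `j` (of length `2 * h`, consecutive ones overlapping by `h`) of the
interval of length `M * (2 * h)` contains only edges of the large interval. -/
lemma edgesIn_sub {a : ℤ} {h M j : ℕ} (hj : j + 1 < 2 * M) :
    edgesIn (a + j * h) (2 * h) ⊆ edgesIn a (M * (2 * h)) := by
  intro e he
  rw [mem_edgesIn] at he ⊢
  push_cast at he ⊢
  have h1 : ((j : ℤ) + 2) * h ≤ 2 * M * h :=
    mul_le_mul_of_nonneg_right (by exact_mod_cast hj) (by positivity)
  have h2 : (0 : ℤ) ≤ j * h := by positivity
  constructor <;> constructor <;> linarith [he.1.1, he.1.2, he.2.1, he.2.2]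

variable {θ θ' : ℝ} {a : ℤ} {h M : ℕ} {ω : Finset (ℤ × ℤ)} {A : ℕ → Finset ℤ} {lo hi : ℕ}

lemma cluster_inter_nonempty (hθ : 7 / 8 ≤ θ) (hh : 0 < h) {j : ℕ} {B C : Finset ℤ}
    (hB : IsCluster θ (a + j * h) (2 * h) ω B)
    (hC : IsCluster θ (a + (j + 1 : ℕ) * h) (2 * h) ω C) : (B ∩ C).Nonempty := by
  by_contra hne
  rw [not_nonempty_iff_eq_empty, ← disjoint_iff_inter_eq_empty] at hne
  have hsub : B ∪ C ⊆ Ico (a + j * h) (a + j * h + 3 * h) := by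
    refine union_subset (fun x hx => ?_) fun x hx => ?_
    · have := hB.1 hx
      rw [mem_Ico] at this ⊢
      push_cast at this
      constructor <;> linarith
    · have := hC.1 hx
      rw [mem_Ico] at this ⊢
      push_cast at this
      constructor <;> linarith
  have hc := card_le_card hsub
  rw [card_union_of_disjoint hne, Int.card_Ico] at hc
  have hc' : B.card + C.card ≤ 3 * h := by omega
  have hc'' : (B.card : ℝ) + C.card ≤ 3 * h := by exact_mod_cast hc'
  have h1 := hB.2.1
  have h2 := hC.2.1
  have hh' : (0 : ℝ) < h := by exact_mod_cast hh
  push_cast at h1 h2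
  nlinarith

lemma rigid_chain (hθ : 7 / 8 ≤ θ) (hh : 0 < h)
    (hA : ∀ j, lo ≤ j → j < hi → IsCluster θ (a + j * h) (2 * h) ω (A j)) :
    Rigid ω ((Ico lo hi).biUnion A) :=
  rigid_biUnion (fun j h1 h2 => (hA j h1 h2).2.2) fun j h1 h2 =>
    cluster_inter_nonempty hθ hh (hA j h1 (by omega)) (hA (j + 1) (by omega) h2)

lemma chain_subset (hhi : hi + 1 ≤ 2 * M)
    (hA : ∀ j, lo ≤ j → j < hi → IsCluster θ (a + j * h) (2 * h) ω (A j)) {x : ℤ}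
    (hx : x ∈ (Ico lo hi).biUnion A) :
    a + lo * h ≤ x ∧ x < a + (hi + 1) * h ∧ a ≤ x ∧ x < a + (M * (2 * h) : ℕ) := by
  rw [mem_biUnion] at hx
  obtain ⟨j, hj, hx⟩ := hx
  rw [mem_Ico] at hj
  have hx := (hA j hj.1 hj.2).1 hx
  rw [mem_Ico] at hx
  push_cast at hx ⊢
  have h1 : ((j : ℤ) + 2) * h ≤ (hi + 1) * h :=
    mul_le_mul_of_nonneg_right (by have := hj.2; omega) (by positivity)
  have h2 : (lo : ℤ) * h ≤ j * h :=
    mul_le_mul_of_nonneg_right (by exact_mod_cast hj.1) (by positivity)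
  have h3 : ((hi : ℤ) + 1) * h ≤ 2 * M * h :=
    mul_le_mul_of_nonneg_right (by exact_mod_cast hhi) (by positivity)
  have h4 : (0 : ℤ) ≤ lo * h := by positivity
  refine ⟨?_, ?_, ?_, ?_⟩ <;> linarith

lemma le_card_chain (hA : ∀ j, lo ≤ j → j < hi → IsCluster θ (a + j * h) (2 * h) ω (A j))
    (s r : ℕ) (h1 : lo ≤ s) (h2 : s + 2 * r ≤ hi + 1) :
    r * (θ * (2 * h)) ≤
      (((Ico lo hi).biUnion A) ∩ Ico (a + s * h) (a + s * h + r * (2 * h))).card := by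
  induction r with
  | zero => simp
  | succ r ih =>
    have hc := hA (s + 2 * r) (by omega) (by omega)
    have ih := ih (by omega)
    set X := (Ico lo hi).biUnion A with hX
    have hAX : A (s + 2 * r) ⊆ X := subset_biUnion_of_mem A (by rw [mem_Ico]; omega)
    have hh0 : (0 : ℤ) ≤ r * h := by positivity
    have hh1 : (0 : ℤ) ≤ h := by positivity
    have hsub : (X ∩ Ico (a + s * h) (a + s * h + r * (2 * h))) ∪ A (s + 2 * r)
        ⊆ X ∩ Ico (a + s * h) (a + s * h + (r + 1 : ℕ) * (2 * h)) := by
      refine union_subset (inter_subset_inter_left fun x hx => ?_)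
        (subset_inter hAX fun x hx => ?_)
      · rw [mem_Ico] at hx ⊢
        push_cast
        constructor <;> linarith
      · have := hc.1 hx
        rw [mem_Ico] at this ⊢
        push_cast at this ⊢
        constructor <;> linarith
    have hdis : Disjoint (X ∩ Ico (a + s * h) (a + s * h + r * (2 * h))) (A (s + 2 * r)) := by
      rw [disjoint_left]
      intro x hx hx'
      have h3 := hc.1 hx'
      rw [mem_inter, mem_Ico] at hx
      rw [mem_Ico] at h3
      push_cast at h3
      linarith [hx.2.2, h3.1]
    have h5 := card_le_card hsub
    rw [card_union_of_disjoint hdis] at h5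
    have h6 : ((X ∩ Ico (a + s * h) (a + s * h + r * (2 * h))).card : ℝ) + (A (s + 2 * r)).card
        ≤ (X ∩ Ico (a + s * h) (a + s * h + (r + 1 : ℕ) * (2 * h))).card := by exact_mod_cast h5
    have h7 := hc.2.1
    push_cast at h6 h7 ⊢
    linarith

lemma isCluster_chain (hθ : 7 / 8 ≤ θ) (hh : 0 < h) (hhi : hi + 1 ≤ 2 * M)
    (hA : ∀ j, lo ≤ j → j < hi →
      IsCluster θ (a + j * h) (2 * h) (ω ∩ edgesIn (a + j * h) (2 * h)) (A j))
    (s r : ℕ) (h1 : lo ≤ s) (h2 : s + 2 * r ≤ hi + 1) (hr : θ' * M ≤ r * θ) :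
    IsCluster θ' a (M * (2 * h)) (ω ∩ edgesIn a (M * (2 * h))) ((Ico lo hi).biUnion A) := by
  have hA' : ∀ j, lo ≤ j → j < hi →
      IsCluster θ (a + j * h) (2 * h) (ω ∩ edgesIn a (M * (2 * h))) (A j) := fun j h3 h4 =>
    ⟨(hA j h3 h4).1, (hA j h3 h4).2.1,
      (hA j h3 h4).2.2.mono (inter_subset_inter_left (edgesIn_sub (by omega)))⟩
  refine ⟨fun x hx => ?_, ?_, rigid_chain hθ hh hA'⟩
  · rw [mem_Ico]
    exact (chain_subset hhi hA' hx).2.2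
  · have h3 := le_card_chain hA' s r h1 h2
    have h4 : ((((Ico lo hi).biUnion A) ∩ Ico (a + s * h) (a + s * h + r * (2 * h))).card : ℝ)
        ≤ ((Ico lo hi).biUnion A).card := by exact_mod_cast card_le_card inter_subset_left
    have h5 := mul_le_mul_of_nonneg_right hr (show (0 : ℝ) ≤ 2 * h by positivity)
    push_cast
    linarith

lemma good_chain (hθ : 7 / 8 ≤ θ) (hh : 0 < h) (hhi : hi + 1 ≤ 2 * M)
    (hg : ∀ j : ℕ, lo ≤ j → j < hi → Good θ (a + j * h) (2 * h) ω)
    (s r : ℕ) (h1 : lo ≤ s) (h2 : s + 2 * r ≤ hi + 1) (hr : θ' * M ≤ r * θ) :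
    Good θ' a (M * (2 * h)) ω := by
  choose! A hA using hg
  exact ⟨_, isCluster_chain hθ hh hhi hA s r h1 h2 hr⟩

lemma bad_dichotomy (hθ : 7 / 8 ≤ θ) (hh : 0 < h) {m : ℕ} (hm : m + 1 ≤ M)
    (hr : θ' * M ≤ (M - m - 1 : ℕ) * θ) (hbad : ¬ Good θ' a (M * (2 * h)) ω) :
    (∃ i ∈ range (2 * M - 1), ∃ j ∈ range (2 * M - 1), i + 2 ≤ j ∧
      ¬ Good θ (a + i * h) (2 * h) ω ∧ ¬ Good θ (a + j * h) (2 * h) ω) ∨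
    ∃ i ∈ range (2 * M - 1), (2 * m < i ∧ i + 2 * m + 3 < 2 * M) ∧
      ¬ Good θ (a + i * h) (2 * h) ω ∧
      (∀ j : ℕ, j < i → Good θ (a + j * h) (2 * h) ω) ∧
      (∀ j : ℕ, i + 2 ≤ j → j < 2 * M - 1 → Good θ (a + j * h) (2 * h) ω) ∧
      ¬ Good θ' a (M * (2 * h)) ω := by
  classical
  by_cases hall : ∃ i : ℕ, i < 2 * M - 1 ∧ ¬ Good θ (a + i * h) (2 * h) ω
  · have hi := Nat.find_spec hall
    have hmin : ∀ j : ℕ, j < Nat.find hall → Good θ (a + j * h) (2 * h) ω := by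
      intro j hj
      have := Nat.find_min hall hj
      by_contra hc
      exact this ⟨by omega, hc⟩
    set i := Nat.find hall
    by_cases hj : ∃ j : ℕ, i + 2 ≤ j ∧ j < 2 * M - 1 ∧ ¬ Good θ (a + j * h) (2 * h) ω
    · obtain ⟨j, hj1, hj2, hj3⟩ := hj
      exact Or.inl ⟨i, mem_range.2 hi.1, j, mem_range.2 hj2, hj1, hi.2, hj3⟩
    · push Not at hj
      refine Or.inr ⟨i, mem_range.2 hi.1, ⟨?_, ?_⟩, hi.2, hmin, hj, hbad⟩
      · by_contra hlt
        exact hbad (good_chain hθ hh (lo := i + 2) (hi := 2 * M - 1) (by omega) hj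
          (2 * m + 2) (M - m - 1) (by omega) (by omega) hr)
      · by_contra hlt
        exact hbad (good_chain hθ hh (lo := 0) (hi := i) (by omega) (fun j _ => hmin j)
          0 (M - m - 1) (by omega) (by omega) hr)
  · push Not at hall
    exact absurd (good_chain hθ hh (lo := 0) (hi := 2 * M - 1) (by omega) (fun j _ => hall j)
      0 (M - m - 1) (by omega) (by omega) hr) hbad

/-- Two sets that are dense on all dyadic scales up to `k` around a gap interact with strength
at least of order `k`. -/
lemma energy_lower_bound {X Y : Finset ℤ} {u : ℤ} {h k : ℕ} (hh : 0 < h) (hθ : 7 / 8 ≤ θ)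
    (hX : ∀ j < k, 2 ^ j * (θ * (2 * h)) ≤
      (X ∩ Ico (u - 2 ^ (j + 1) * (2 * h)) (u - 2 ^ j * (2 * h))).card)
    (hY : ∀ j < k, 2 ^ j * (θ * (2 * h)) ≤
      (Y ∩ Ico (u + h + 2 ^ j * (2 * h)) (u + h + 2 ^ (j + 1) * (2 * h))).card) :
    (k : ℝ) / 40 ≤ ∑ e ∈ X ×ˢ Y, 1 / ((e.2 : ℝ) - e.1) ^ 2 := by
  have hhR : (0 : ℝ) < h := by exact_mod_cast hh
  have hhZ : (0 : ℤ) < h := by exact_mod_cast hh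
  set Xj : ℕ → Finset ℤ := fun j => X ∩ Ico (u - 2 ^ (j + 1) * (2 * h)) (u - 2 ^ j * (2 * h))
  set Yj : ℕ → Finset ℤ :=
    fun j => Y ∩ Ico (u + h + 2 ^ j * (2 * h)) (u + h + 2 ^ (j + 1) * (2 * h))
  have hdis : Set.PairwiseDisjoint (range k : Set ℕ) fun j => Xj j ×ˢ Yj j := by
    have key : ∀ i j : ℕ, i < j → Disjoint (Xj i ×ˢ Yj i) (Xj j ×ˢ Yj j) := by
      intro i j hij
      rw [disjoint_left]
      intro e he he'
      simp only [Xj, mem_product, mem_inter, mem_Ico] at he he'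
      have hp : (2 : ℤ) ^ (i + 1) * (2 * h) ≤ 2 ^ j * (2 * h) :=
        mul_le_mul_of_nonneg_right (pow_le_pow_right₀ (by norm_num) hij) (by positivity)
      linarith [he.1.2.1, he'.1.2.2]
    intro i _ j _ hij
    rcases lt_or_gt_of_ne hij with hlt | hlt
    · exact key i j hlt
    · exact (key j i hlt).symm
  have hsub : (range k).biUnion (fun j => Xj j ×ˢ Yj j) ⊆ X ×ˢ Y :=
    biUnion_subset.2 fun j _ => product_subset_product inter_subset_left inter_subset_left
  refine le_trans ?_ (sum_le_sum_of_subset_of_nonneg hsub fun e _ _ => by positivity)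
  rw [sum_biUnion hdis]
  have hterm : ∀ j ∈ range k,
      (1 : ℝ) / 40 ≤ ∑ e ∈ Xj j ×ˢ Yj j, 1 / ((e.2 : ℝ) - e.1) ^ 2 := by
    intro j hj
    have hXc := hX j (mem_range.1 hj)
    have hYc := hY j (mem_range.1 hj)
    have hP : (0 : ℝ) < 2 ^ j * (2 * h) := by positivity
    have hle : ∀ e ∈ Xj j ×ˢ Yj j,
        1 / (5 * (2 ^ j * (2 * h) : ℝ)) ^ 2 ≤ 1 / ((e.2 : ℝ) - e.1) ^ 2 := by
      intro e he
      simp only [Xj, Yj, mem_product, mem_inter, mem_Ico] at he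
      obtain ⟨⟨-, h1, h2⟩, -, h3, h4⟩ := he
      have hPZ : (h : ℤ) ≤ 2 ^ j * (2 * h) := by
        have : (1 : ℤ) ≤ 2 ^ j := one_le_pow₀ (by norm_num)
        nlinarith
      rw [pow_succ] at h1 h4
      have h5 : 0 < e.2 - e.1 := by linarith
      have h6 : e.2 - e.1 ≤ 5 * (2 ^ j * (2 * h)) := by linarith
      have h5' : (0 : ℝ) < e.2 - e.1 := by exact_mod_cast h5
      have h6' : (e.2 : ℝ) - e.1 ≤ 5 * (2 ^ j * (2 * h)) := by exact_mod_cast h6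
      exact one_div_le_one_div_of_le (by positivity) (pow_le_pow_left₀ h5'.le h6' 2)
    have hs := card_nsmul_le_sum _ _ _ hle
    refine le_trans ?_ hs
    rw [card_product, nsmul_eq_mul, mul_one_div, le_div_iff₀ (by positivity)]
    push_cast
    set P : ℝ := 2 ^ j * (2 * h)
    have hX' : 7 / 8 * P ≤ (Xj j).card := le_trans (by nlinarith) hXc
    have hY' : 7 / 8 * P ≤ (Yj j).card := le_trans (by nlinarith) hYc
    have := mul_le_mul hX' hY' (by positivity) (by positivity)
    nlinarith
  have := card_nsmul_le_sum _ _ _ hterm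
  rw [card_range, nsmul_eq_mul] at this
  linarith

/-- When only the blocks `i` and `i + 1` may be bad, the chains on both sides are joined, to a
cluster of the large block, by any edge between two sets of large interaction. -/
lemma exists_sides {i k m : ℕ} (hθ : 7 / 8 ≤ θ) (hh : 0 < h) (hm : m = 2 ^ k)
    (hr : θ' * M ≤ (M - m - 1 : ℕ) * θ) (hi1 : 2 * m < i) (hi2 : i + 2 * m + 3 < 2 * M)
    (hl : ∀ j : ℕ, j < i → Good θ (a + j * h) (2 * h) ω)
    (hg : ∀ j : ℕ, i + 2 ≤ j → j < 2 * M - 1 → Good θ (a + j * h) (2 * h) ω) :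
    ∃ X Y : Finset ℤ, X ×ˢ Y ⊆ edgesIn a (M * (2 * h)) ∧
      (∀ e ∈ X ×ˢ Y, e.1 < a + (i + 1) * h ∧ a + (i + 2) * h ≤ e.2) ∧
      (k : ℝ) / 40 ≤ ∑ e ∈ X ×ˢ Y, 1 / ((e.2 : ℝ) - e.1) ^ 2 ∧
      ∀ η, ¬ Disjoint η (X ×ˢ Y) → Good θ' a (M * (2 * h)) (ω ∪ η) := by
  choose! A hA using hl
  choose! B hB using hg
  have hA' : ∀ j, 0 ≤ j → j < i →
      IsCluster θ (a + j * h) (2 * h) (ω ∩ edgesIn a (M * (2 * h))) (A j) := fun j _ h4 =>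
    ⟨(hA j h4).1, (hA j h4).2.1,
      (hA j h4).2.2.mono (inter_subset_inter_left (edgesIn_sub (by omega)))⟩
  have hB' : ∀ j, i + 2 ≤ j → j < 2 * M - 1 →
      IsCluster θ (a + j * h) (2 * h) (ω ∩ edgesIn a (M * (2 * h))) (B j) := fun j h3 h4 =>
    ⟨(hB j h3 h4).1, (hB j h3 h4).2.1,
      (hB j h3 h4).2.2.mono (inter_subset_inter_left (edgesIn_sub (by omega)))⟩
  have hXs := fun x hx => chain_subset (M := M) (x := x) (by omega) hA' hx
  have hYs := fun x hx => chain_subset (M := M) (x := x) (by omega) hB' hx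
  have hXr := rigid_chain hθ hh hA'
  have hYr := rigid_chain hθ hh hB'
  have hXc := le_card_chain hA'
  have hYc := le_card_chain hB'
  set X := (Ico 0 i).biUnion A
  set Y := (Ico (i + 2) (2 * M - 1)).biUnion B
  have hsub : X ×ˢ Y ⊆ edgesIn a (M * (2 * h)) := by
    intro e he
    rw [mem_product] at he
    rw [mem_edgesIn]
    exact ⟨(hXs _ he.1).2.2, (hYs _ he.2).2.2⟩
  have hsep : ∀ e ∈ X ×ˢ Y, e.1 < a + (i + 1) * h ∧ a + (i + 2) * h ≤ e.2 := by
    intro e he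
    rw [mem_product] at he
    have h1 := (hYs _ he.2).1
    push_cast at h1
    exact ⟨(hXs _ he.1).2.1, h1⟩
  refine ⟨X, Y, hsub, hsep, ?_, ?_⟩
  · have hpow : ∀ j < k, 4 * 2 ^ j ≤ 2 * m := by
      intro j hj
      have : 2 ^ (j + 1) ≤ 2 ^ k := Nat.pow_le_pow_right (by norm_num) hj
      rw [pow_succ] at this
      omega
    refine energy_lower_bound (u := a + (i + 1) * h) hh hθ (fun j hj => ?_) fun j hj => ?_
    · have hj' := hpow j hj
      have h1 := hXc (i + 1 - 4 * 2 ^ j) (2 ^ j) (by omega) (by omega)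
      have h2 : ((i + 1 - 4 * 2 ^ j : ℕ) : ℤ) = i + 1 - 4 * 2 ^ j := by
        rw [Nat.cast_sub (by omega)]
        push_cast
        rfl
      rw [h2] at h1
      push_cast at h1
      convert h1 using 5 <;> ring
    · have hj' := hpow j hj
      have h1 := hYc (i + 2 + 2 * 2 ^ j) (2 ^ j) (by omega) (by omega)
      push_cast at h1
      convert h1 using 5 <;> ring
  · intro η hη
    rw [not_disjoint_iff] at hη
    obtain ⟨e, heη, he⟩ := hη
    have hsubω : ω ∩ edgesIn a (M * (2 * h)) ⊆ (ω ∪ η) ∩ edgesIn a (M * (2 * h)) :=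
      inter_subset_inter_right subset_union_left
    refine ⟨X ∪ Y, fun x hx => ?_, ?_, (hXr.mono hsubω).union_of_edge (hYr.mono hsubω)
      (mem_product.1 he).1 (mem_product.1 he).2
      (mem_inter.2 ⟨mem_union_right _ heη, hsub he⟩)⟩
    · rw [mem_Ico]
      rcases mem_union.1 hx with hx | hx
      · exact (hXs x hx).2.2
      · exact (hYs x hx).2.2
    · have hdis : Disjoint X Y := by
        rw [disjoint_left]
        intro x hx hy
        have h1 := hsep (x, x) (mem_product.2 ⟨hx, hy⟩)
        have h2 : (0 : ℤ) < h := by exact_mod_cast hh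
        linarith [h1.1, h1.2]
      have h1 := hXc 0 ((i + 1) / 2) le_rfl (by omega)
      have h2 := hYc (i + 2) ((2 * M - i - 2) / 2) le_rfl (by omega)
      have h3 : (((i + 1) / 2 : ℕ) : ℝ) * (θ * (2 * h)) ≤ X.card :=
        h1.trans (by exact_mod_cast card_le_card inter_subset_left)
      have h4 : (((2 * M - i - 2) / 2 : ℕ) : ℝ) * (θ * (2 * h)) ≤ Y.card :=
        h2.trans (by exact_mod_cast card_le_card inter_subset_left)
      have h5 : ((M - m - 1 : ℕ) : ℝ) ≤ ((i + 1) / 2 : ℕ) + ((2 * M - i - 2) / 2 : ℕ) := by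
        have : M - m - 1 ≤ (i + 1) / 2 + (2 * M - i - 2) / 2 := by omega
        exact_mod_cast this
      have h6 : (0 : ℝ) ≤ θ * (2 * h) := by positivity
      have h7 := mul_le_mul_of_nonneg_right h5 h6
      have h8 := mul_le_mul_of_nonneg_right hr (show (0 : ℝ) ≤ 2 * h by positivity)
      rw [card_union_of_disjoint hdis]
      push_cast
      linarith

end Blocks

section Renormalization

open Finset

variable {p : ℤ × ℤ → ℝ} {b θ θ' q : ℝ} {h M k m : ℕ}

lemma bernP_two_bad (hp0 : ∀ e, 0 ≤ p e) (hp1 : ∀ e, p e ≤ 1) (hq0 : 0 ≤ q)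
    (hq : ∀ a F, edgesIn a (2 * h) ⊆ F → bernP p F (fun ω => ¬ Good θ a (2 * h) ω) ≤ q)
    {a : ℤ} {F : Finset (ℤ × ℤ)} (hF : edgesIn a (M * (2 * h)) ⊆ F) {i j : ℕ}
    (hij : i + 2 ≤ j) (hj : j + 1 < 2 * M) :
    bernP p F (fun ω => ¬ Good θ (a + i * h) (2 * h) ω ∧ ¬ Good θ (a + j * h) (2 * h) ω)
      ≤ q * q := by
  have hiF : edgesIn (a + i * h) (2 * h) ⊆ F := (edgesIn_sub (by omega)).trans hF
  have hdis : edgesIn (a + j * h) (2 * h) ⊆ F \ edgesIn (a + i * h) (2 * h) := by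
    intro e he
    refine mem_sdiff.2 ⟨hF (edgesIn_sub hj he), fun he' => ?_⟩
    rw [mem_edgesIn] at he he'
    push_cast at he he'
    have : ((i : ℤ) + 2) * h ≤ j * h :=
      mul_le_mul_of_nonneg_right (by exact_mod_cast hij) (by positivity)
    linarith [he.1.1, he'.1.2]
  refine (bernP_le_mul hp0 hp1 hiF (R := fun ω => ¬ Good θ (a + j * h) (2 * h) ω) (κ := q)
    (fun ω _ η _ hQ hg => hQ.2 (hg.mono subset_union_left)) fun ω _ _ => ?_).trans
    (mul_le_mul_of_nonneg_left (hq _ _ hdis) hq0)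
  refine le_trans (bernP_mono hp0 hp1 fun η _ hQ hg => ?_) (hq (a + i * h) _ Subset.rfl)
  exact hQ.1 (hg.mono subset_union_right)

lemma bernP_one_bad (hp0 : ∀ e, 0 ≤ p e) (hp1 : ∀ e, p e ≤ 1) (hb : 0 ≤ b)
    (hpb : ∀ e : ℤ × ℤ, e.1 < e.2 → 1 - p e ≤ Real.exp (-(b * (1 / ((e.2 : ℝ) - e.1) ^ 2))))
    (hθ : 7 / 8 ≤ θ) (hh : 0 < h) (hm : m = 2 ^ k) (hr : θ' * M ≤ (M - m - 1 : ℕ) * θ)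
    (hq : ∀ a F, edgesIn a (2 * h) ⊆ F → bernP p F (fun ω => ¬ Good θ a (2 * h) ω) ≤ q)
    {a : ℤ} {F : Finset (ℤ × ℤ)} (hF : edgesIn a (M * (2 * h)) ⊆ F) {i : ℕ}
    (hi1 : 2 * m < i) (hi2 : i + 2 * m + 3 < 2 * M) :
    bernP p F (fun ω => ¬ Good θ (a + i * h) (2 * h) ω ∧
      (∀ j : ℕ, j < i → Good θ (a + j * h) (2 * h) ω) ∧
      (∀ j : ℕ, i + 2 ≤ j → j < 2 * M - 1 → Good θ (a + j * h) (2 * h) ω) ∧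
      ¬ Good θ' a (M * (2 * h)) ω) ≤ Real.exp (-(b * (k / 40))) * q := by
  classical
  set T := F.filter fun e => e.1 < a + (i + 1) * h ∧ a + (i + 2) * h ≤ e.2 with hT
  have hTdis : ∀ j : ℕ, Disjoint T (edgesIn (a + j * h) (2 * h)) := by
    intro j
    rw [disjoint_left]
    intro e he he'
    rw [hT, mem_filter] at he
    rw [mem_edgesIn] at he'
    push_cast at he'
    have h0 : (0 : ℤ) ≤ h := by positivity
    rcases Nat.lt_or_ge i j with hij | hij
    · have : ((i : ℤ) + 1) * h ≤ j * h := mul_le_mul_of_nonneg_right (by exact_mod_cast hij) h0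
      linarith [he.2.1, he'.1.1]
    · have : (j : ℤ) * h ≤ i * h := mul_le_mul_of_nonneg_right (by exact_mod_cast hij) h0
      linarith [he.2.2, he'.2.2]
  have hgood : ∀ (j : ℕ) (ω η : Finset (ℤ × ℤ)), η ⊆ T →
      Good θ (a + j * h) (2 * h) (ω ∪ η) → Good θ (a + j * h) (2 * h) ω := by
    intro j ω η hη hg
    unfold Good at hg ⊢
    rwa [union_inter_distrib_right,
      disjoint_iff_inter_eq_empty.1 ((hTdis j).mono_left hη), union_empty] at hg
  have hsub : edgesIn (a + i * h) (2 * h) ⊆ F \ T := fun e he =>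
    mem_sdiff.2 ⟨hF (edgesIn_sub (by omega) he), fun heT => disjoint_left.1 (hTdis i) heT he⟩
  refine (bernP_le_mul hp0 hp1 (filter_subset _ F)
    (R := fun ω => ¬ Good θ (a + i * h) (2 * h) ω) (κ := Real.exp (-(b * (k / 40))))
    (fun ω _ η _ hQ hg => hQ.1 (hg.mono subset_union_left)) fun ω _ _ => ?_).trans
    (mul_le_mul_of_nonneg_left (hq _ _ hsub) (Real.exp_pos _).le)
  rw [← hT]
  by_cases hall : (∀ j : ℕ, j < i → Good θ (a + j * h) (2 * h) ω) ∧
      (∀ j : ℕ, i + 2 ≤ j → j < 2 * M - 1 → Good θ (a + j * h) (2 * h) ω)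
  · obtain ⟨X, Y, hXY, hsep, hen, hjoin⟩ :=
      exists_sides hθ hh hm hr hi1 hi2 hall.1 hall.2
    have hZT : X ×ˢ Y ⊆ T := fun e he => mem_filter.2 ⟨hF (hXY he), hsep e he⟩
    calc _ ≤ bernP p T (fun η => Disjoint η (X ×ˢ Y)) :=
          bernP_mono hp0 hp1 fun η _ hQ => by
            by_contra hd
            exact hQ.2.2.2 (hjoin η hd)
      _ = ∏ e ∈ X ×ˢ Y, (1 - p e) := bernP_disjoint hZT
      _ ≤ ∏ e ∈ X ×ˢ Y, Real.exp (-(b * (1 / ((e.2 : ℝ) - e.1) ^ 2))) := by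
          refine prod_le_prod (fun e _ => sub_nonneg.2 (hp1 e)) fun e he => hpb e ?_
          have h0 : (0 : ℤ) < h := by exact_mod_cast hh
          linarith [(hsep e he).1, (hsep e he).2]
      _ ≤ Real.exp (-(b * (k / 40))) := by
          rw [← Real.exp_sum, sum_neg_distrib, ← mul_sum]
          exact Real.exp_le_exp.2 (neg_le_neg (mul_le_mul_of_nonneg_left hen hb))
  · refine le_trans (bernP_mono hp0 hp1 (R := fun _ => False) fun η hη hQ => hall ?_) ?_
    · exact ⟨fun j hj => hgood j ω η hη (hQ.2.1 j hj),
        fun j hj hj' => hgood j ω η hη (hQ.2.2.1 j hj hj')⟩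
    · simpa [bernP, bernE_const] using (Real.exp_pos _).le

/-- One renormalization step for the probability that a block is bad. -/
lemma bernP_bad_step (hp0 : ∀ e, 0 ≤ p e) (hp1 : ∀ e, p e ≤ 1) (hb : 0 ≤ b)
    (hpb : ∀ e : ℤ × ℤ, e.1 < e.2 → 1 - p e ≤ Real.exp (-(b * (1 / ((e.2 : ℝ) - e.1) ^ 2))))
    (hθ : 7 / 8 ≤ θ) (hh : 0 < h) (hm : m = 2 ^ k) (hmM : m + 1 ≤ M)
    (hr : θ' * M ≤ (M - m - 1 : ℕ) * θ) (hq0 : 0 ≤ q)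
    (hq : ∀ a F, edgesIn a (2 * h) ⊆ F → bernP p F (fun ω => ¬ Good θ a (2 * h) ω) ≤ q)
    (a : ℤ) (F : Finset (ℤ × ℤ)) (hF : edgesIn a (M * (2 * h)) ⊆ F) :
    bernP p F (fun ω => ¬ Good θ' a (M * (2 * h)) ω)
      ≤ (2 * M) ^ 2 * q ^ 2 + 2 * M * (Real.exp (-(b * (k / 40))) * q) := by
  have hfalse : ∀ {c : ℝ}, 0 ≤ c → bernP p F (fun _ => False) ≤ c := fun {c} hc => by
    simpa [bernP, bernE_const] using hc
  have hκq : 0 ≤ Real.exp (-(b * (k / 40))) * q := mul_nonneg (Real.exp_pos _).le hq0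
  have hcard : ((range (2 * M - 1)).card : ℝ) ≤ 2 * M := by
    rw [card_range]
    exact_mod_cast Nat.sub_le _ _
  refine (bernP_mono hp0 hp1 fun ω _ hbad => bad_dichotomy hθ hh hmM hr hbad).trans
    ((bernP_or_le hp0 hp1 F _ _).trans (add_le_add ?_ ?_))
  · calc _ ≤ ((range (2 * M - 1)).card : ℝ) * ((range (2 * M - 1)).card * (q * q)) := by
          refine bernP_exists_le hp0 hp1 _ _ _ fun i _ =>
            bernP_exists_le hp0 hp1 _ _ _ fun j hj => ?_
          by_cases hij : i + 2 ≤ j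
          · refine le_trans (bernP_mono hp0 hp1 fun ω _ hQ => hQ.2)
              (bernP_two_bad hp0 hp1 hq0 hq hF hij ?_)
            have := mem_range.1 hj
            omega
          · exact (bernP_mono hp0 hp1 fun ω _ hQ => hij hQ.1).trans (hfalse (by positivity))
      _ ≤ 2 * M * (2 * M * (q * q)) := by gcongr
      _ = _ := by ring
  · refine (bernP_exists_le hp0 hp1 _ _ _ fun i _ => ?_).trans
      (mul_le_mul_of_nonneg_right hcard hκq)
    by_cases hi : 2 * m < i ∧ i + 2 * m + 3 < 2 * M
    · exact (bernP_mono hp0 hp1 fun ω _ hQ => hQ.2).trans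
        (bernP_one_bad hp0 hp1 hb hpb hθ hh hm hr hq hF hi.1 hi.2)
    · exact (bernP_mono hp0 hp1 fun ω _ hQ => hi hQ.1).trans (hfalse hκq)

/-- A cluster of `[0, K)` of density at least `θ` contains the origin. -/
def GoodAtZero (θ : ℝ) (K : ℕ) (ω : Finset (ℤ × ℤ)) : Prop :=
  ∃ A, IsCluster θ 0 K (ω ∩ edgesIn 0 K) A ∧ (0 : ℤ) ∈ A

lemma goodAtZero_step (hθ : 7 / 8 ≤ θ) (hh : 0 < h) (hmM : m + 1 ≤ M)
    (hr : θ' * M ≤ (M - m - 1 : ℕ) * θ) {ω : Finset (ℤ × ℤ)}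
    (hbad : ¬ GoodAtZero θ' (M * (2 * h)) ω) :
    ¬ GoodAtZero θ (2 * h) ω ∨
      ∃ i ∈ range (2 * M - 1), ¬ Good θ (0 + i * h) (2 * h) ω := by
  by_contra! hc
  obtain ⟨⟨A₀, hA₀, h0⟩, hg⟩ := hc
  simp only [Good] at hg
  choose! A hA using hg
  refine hbad ⟨_, isCluster_chain (lo := 0) (hi := 2 * M - 1)
    (A := Function.update A 0 A₀) hθ hh (by omega) (fun j _ hj => ?_)
    0 (M - m - 1) le_rfl (by omega) hr, ?_⟩
  · rcases eq_or_ne j 0 with rfl | hj0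
    · simpa using hA₀
    · rw [Function.update_of_ne hj0]
      exact hA j (mem_range.2 hj)
  · rw [mem_biUnion]
    exact ⟨0, by rw [mem_Ico]; omega, by simpa using h0⟩

/-- Half the length of the blocks of the successive scales. -/
def halfLen : ℕ → ℕ
  | 0 => 1
  | n + 1 => 4 ^ (n + 5) * halfLen n

lemma lt_halfLen (n : ℕ) : n < halfLen n := by
  induction n with
  | zero => simp [halfLen]
  | succ n ih =>
    have h1 : 4 ≤ 4 ^ (n + 5) := by
      calc 4 = 4 ^ 1 := rfl
        _ ≤ 4 ^ (n + 5) := Nat.pow_le_pow_right (by norm_num) (by omega)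
    have h2 : 4 * halfLen n ≤ 4 ^ (n + 5) * halfLen n := Nat.mul_le_mul_right _ h1
    simp only [halfLen]
    omega

lemma two_mul_halfLen_succ (n : ℕ) :
    2 * halfLen (n + 1) = 4 ^ (n + 5) * (2 * halfLen n) := by
  simp only [halfLen]
  ring

/-- The cluster densities required at the successive scales. -/
def density (n : ℕ) : ℝ := 7 / 8 + 4 / 2 ^ (n + 5)

lemma le_density (n : ℕ) : 7 / 8 ≤ density n := by
  have : (0 : ℝ) ≤ 4 / 2 ^ (n + 5) := by positivity
  unfold density
  linarith

lemma density_zero : density 0 = 1 := by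
  norm_num [density]

lemma two_pow_add_one_le (n : ℕ) : 2 ^ (n + 5) + 1 ≤ 4 ^ (n + 5) := by
  have : 2 ^ (n + 5) < 4 ^ (n + 5) := Nat.pow_lt_pow_left (by norm_num) (by omega)
  omega

lemma density_step (n : ℕ) :
    density (n + 1) * (4 ^ (n + 5) : ℕ) ≤
      (4 ^ (n + 5) - 2 ^ (n + 5) - 1 : ℕ) * density n := by
  rw [Nat.sub_sub, Nat.cast_sub (two_pow_add_one_le n)]
  have h4 : (4 : ℝ) ^ (n + 5) = (2 ^ (n + 5)) ^ 2 := by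
    rw [← pow_mul, mul_comm, pow_mul]
    norm_num
  have hx : (32 : ℝ) ≤ 2 ^ (n + 5) := by
    calc (32 : ℝ) = 2 ^ 5 := by norm_num
      _ ≤ 2 ^ (n + 5) := pow_le_pow_right₀ (by norm_num) (by omega)
  push_cast
  rw [h4, density, density, show n + 1 + 5 = n + 5 + 1 by ring, pow_succ (2 : ℝ) (n + 5)]
  set x : ℝ := 2 ^ (n + 5)
  have hx0 : x ≠ 0 := by positivity
  have e1 : (7 / 8 + 4 / (x * 2)) * x ^ 2 = 7 / 8 * x ^ 2 + 2 * x := by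
    field_simp
    ring
  have e2 : (x ^ 2 - (x + 1)) * (7 / 8 + 4 / x)
      = 7 / 8 * x ^ 2 + 4 * x - 7 / 8 * (x + 1) - 4 - 4 / x := by
    field_simp
    ring
  have e3 : 4 / x ≤ 1 := by
    rw [div_le_one (by positivity)]
    linarith
  rw [e1, e2]
  linarith

section Scales

variable {δ : ℝ}

lemma numeric_step {x κ : ℝ} (hx : 1024 ≤ x) (hδ0 : 0 < δ) (hδ1 : δ ≤ 1)
    (hκ : κ ≤ 1 / x ^ 3) :
    (2 * x) ^ 2 * (δ / x ^ 3) ^ 2 + 2 * x * (κ * (δ / x ^ 3)) ≤ δ / (64 * x ^ 3) := by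
  have hx0 : 0 < x := by linarith
  have h1 : 2 * x * (κ * (δ / x ^ 3)) ≤ 2 * x * (1 / x ^ 3 * (δ / x ^ 3)) := by gcongr
  refine (add_le_add_right h1 _).trans ?_
  have e : (2 * x) ^ 2 * (δ / x ^ 3) ^ 2 + 2 * x * (1 / x ^ 3 * (δ / x ^ 3))
      = δ * (4 * δ * x + 2) / x ^ 5 := by
    field_simp
    ring
  rw [e, div_le_div_iff₀ (by positivity) (by positivity)]
  have h2 : (4 * δ * x + 2) * 64 ≤ x ^ 2 := by nlinarith
  have h3 : 0 ≤ δ * x ^ 3 := by positivity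
  nlinarith [mul_le_mul_of_nonneg_left h2 h3]

lemma pow_four_ge (n : ℕ) : (1024 : ℝ) ≤ 4 ^ (n + 5) := by
  calc (1024 : ℝ) = 4 ^ 5 := by norm_num
    _ ≤ 4 ^ (n + 5) := pow_le_pow_right₀ (by norm_num) (by omega)

lemma pow_sixtyFour (n : ℕ) : (64 : ℝ) ^ n = (4 ^ n) ^ 3 := by
  rw [← pow_mul, mul_comm, pow_mul]
  norm_num

lemma isCluster_of_edge {ω : Finset (ℤ × ℤ)} {a : ℤ} (h : (a, a + 1) ∈ ω) :
    IsCluster (density 0) a (2 * halfLen 0) (ω ∩ edgesIn a (2 * halfLen 0)) {a, a + 1} := by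
  have hs : ∀ (η : Finset (ℤ × ℤ)) (x : ℤ), Rigid η {x} := by
    intro η x s _ u hu v hv
    rw [mem_singleton.1 hu, mem_singleton.1 hv]
  refine ⟨fun x hx => ?_, ?_, (hs _ a).union_of_edge (hs _ (a + 1)) (mem_singleton_self a)
    (mem_singleton_self (a + 1)) (mem_inter.2 ⟨h, ?_⟩)⟩
  · simp only [mem_insert, mem_singleton] at hx
    simp only [halfLen, mem_Ico]
    push_cast
    omega
  · rw [card_pair (by omega), density_zero]
    simp [halfLen]
  · rw [mem_edgesIn]
    simp only [halfLen]
    push_cast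
    omega

lemma bernP_edge_closed (hpb : ∀ e : ℤ × ℤ, e.1 < e.2 →
      1 - p e ≤ Real.exp (-(b * (1 / ((e.2 : ℝ) - e.1) ^ 2))))
    (hbδ : Real.exp (-b) ≤ δ / 64 ^ 5) {a : ℤ} {F : Finset (ℤ × ℤ)}
    (hF : edgesIn a (2 * halfLen 0) ⊆ F) :
    bernP p F (fun ω => Disjoint ω {(a, a + 1)}) ≤ δ / 64 ^ 5 := by
  rw [bernP_disjoint, prod_singleton]
  · refine (hpb (a, a + 1) (by simp)).trans (le_trans (le_of_eq ?_) hbδ)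
    simp
  · rw [singleton_subset_iff]
    refine hF ?_
    rw [mem_edgesIn]
    simp only [halfLen]
    push_cast
    omega

lemma bernP_bad_le (hp0 : ∀ e, 0 ≤ p e) (hp1 : ∀ e, p e ≤ 1) (hb : 0 ≤ b)
    (hpb : ∀ e : ℤ × ℤ, e.1 < e.2 → 1 - p e ≤ Real.exp (-(b * (1 / ((e.2 : ℝ) - e.1) ^ 2))))
    (hδ0 : 0 < δ) (hδ1 : δ ≤ 1) (hbδ : Real.exp (-b) ≤ δ / 64 ^ 5)
    (hb40 : Real.exp (-(b / 40)) ≤ 1 / 64) (n : ℕ) (a : ℤ) (F : Finset (ℤ × ℤ))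
    (hF : edgesIn a (2 * halfLen n) ⊆ F) :
    bernP p F (fun ω => ¬ Good (density n) a (2 * halfLen n) ω) ≤ δ / 64 ^ (n + 5) := by
  induction n generalizing a F with
  | zero =>
    refine (bernP_mono hp0 hp1 fun ω _ hbad => ?_).trans (bernP_edge_closed hpb hbδ hF)
    rw [disjoint_singleton_right]
    exact fun he => hbad ⟨_, isCluster_of_edge he⟩
  | succ n ih =>
    rw [two_mul_halfLen_succ] at hF ⊢
    refine (bernP_bad_step (k := n + 5) hp0 hp1 hb hpb (le_density n)
      (Nat.zero_lt_of_lt (lt_halfLen n)) rfl (two_pow_add_one_le n) (density_step n)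
      (by positivity) ih a F hF).trans ?_
    have hκ : Real.exp (-(b * ((n + 5 : ℕ) / 40))) ≤ 1 / (4 ^ (n + 5)) ^ 3 := by
      rw [← pow_sixtyFour, ← one_div_pow]
      refine le_trans (le_of_eq ?_) (pow_le_pow_left₀ (Real.exp_pos _).le hb40 (n + 5))
      rw [← Real.exp_nat_mul]
      congr 1
      ring
    have := numeric_step (pow_four_ge n) hδ0 hδ1 hκ
    rw [show n + 1 + 5 = n + 5 + 1 by ring, pow_succ (64 : ℝ) (n + 5), mul_comm ((64 : ℝ) ^ (n + 5)),
      pow_sixtyFour]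
    push_cast at this ⊢
    exact this

lemma bernP_not_goodAtZero_le (hp0 : ∀ e, 0 ≤ p e) (hp1 : ∀ e, p e ≤ 1) (hb : 0 ≤ b)
    (hpb : ∀ e : ℤ × ℤ, e.1 < e.2 → 1 - p e ≤ Real.exp (-(b * (1 / ((e.2 : ℝ) - e.1) ^ 2))))
    (hδ0 : 0 < δ) (hδ1 : δ ≤ 1) (hbδ : Real.exp (-b) ≤ δ / 64 ^ 5)
    (hb40 : Real.exp (-(b / 40)) ≤ 1 / 64) (n : ℕ) (F : Finset (ℤ × ℤ))
    (hF : edgesIn 0 (2 * halfLen n) ⊆ F) :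
    bernP p F (fun ω => ¬ GoodAtZero (density n) (2 * halfLen n) ω)
      ≤ δ * (1 - 1 / 4 ^ (n + 5)) := by
  induction n with
  | zero =>
    refine (bernP_mono hp0 hp1 (R := fun ω => Disjoint ω {((0 : ℤ), (0 : ℤ) + 1)})
      fun ω _ hbad => ?_).trans ((bernP_edge_closed hpb hbδ hF).trans ?_)
    · rw [disjoint_singleton_right]
      exact fun he => hbad ⟨_, isCluster_of_edge he, by simp⟩
    · rw [div_eq_mul_one_div]
      exact mul_le_mul_of_nonneg_left (by norm_num) hδ0.le
  | succ n ih =>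
    rw [two_mul_halfLen_succ] at hF ⊢
    have hsub : ∀ j ∈ range (2 * 4 ^ (n + 5) - 1),
        edgesIn (0 + j * halfLen n) (2 * halfLen n) ⊆ F := fun j hj =>
      (edgesIn_sub (by have := mem_range.1 hj; omega)).trans hF
    have h0 : edgesIn 0 (2 * halfLen n) ⊆ F := by
      have hpos : 0 < 4 ^ (n + 5) := by positivity
      have := hsub 0 (mem_range.2 (by omega))
      simpa using this
    refine (bernP_mono hp0 hp1 fun ω _ hbad => goodAtZero_step (le_density n)
      (Nat.zero_lt_of_lt (lt_halfLen n)) (two_pow_add_one_le n) (density_step n) hbad).trans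
      ((bernP_or_le hp0 hp1 F _ _).trans ((add_le_add (ih h0) (bernP_exists_le hp0 hp1 _ _ _
        fun j hj => bernP_bad_le hp0 hp1 hb hpb hδ0 hδ1 hbδ hb40 n _ F (hsub j hj))).trans ?_))
    have hcard : ((range (2 * 4 ^ (n + 5) - 1)).card : ℝ) ≤ 2 * 4 ^ (n + 5) := by
      rw [card_range]
      exact_mod_cast Nat.sub_le _ _
    have hx := pow_four_ge n
    have hle : ((range (2 * 4 ^ (n + 5) - 1)).card : ℝ) * (δ / 64 ^ (n + 5))
        ≤ 2 * 4 ^ (n + 5) * (δ / 64 ^ (n + 5)) :=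
      mul_le_mul_of_nonneg_right hcard (by positivity)
    refine (add_le_add_right hle _).trans ?_
    rw [show n + 1 + 5 = n + 5 + 1 by ring, pow_succ (4 : ℝ) (n + 5), pow_sixtyFour]
    generalize (4 : ℝ) ^ (n + 5) = x at hx
    have hx0 : 0 < x := by linarith
    have e : δ * (1 - 1 / (x * 4)) - (δ * (1 - 1 / x) + 2 * x * (δ / x ^ 3))
        = δ * (3 * x - 8) / (4 * x ^ 2) := by
      field_simp
      ring
    have : 0 ≤ δ * (3 * x - 8) / (4 * x ^ 2) :=
      div_nonneg (mul_nonneg hδ0.le (by linarith)) (by positivity)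
    linarith

lemma GoodAtZero.plusAtZero {θ : ℝ} {K L : ℕ} {ω : Finset (ℤ × ℤ)} (hK : (L : ℝ) + 1 < θ * K)
    (h : GoodAtZero θ K ω) : PlusAtZero L ω := by
  obtain ⟨A, ⟨hA1, hA2, hA3⟩, h0⟩ := h
  obtain ⟨x, hx, hxL⟩ : ∃ x ∈ A, (L : ℤ) < x := by
    by_contra! hc
    have hsub : A ⊆ Ico 0 ((L : ℤ) + 1) := by
      intro x hx
      have h1 := mem_Ico.1 (hA1 hx)
      have h2 := hc x hx
      rw [mem_Ico]
      omega
    have h3 := card_le_card hsub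
    rw [Int.card_Ico] at h3
    have h4 : A.card ≤ L + 1 := by omega
    have h5 : (A.card : ℝ) ≤ L + 1 := by exact_mod_cast h4
    linarith
  intro B hB hc hB0
  have hxB : x ∈ B := (hA3 (B : Set ℤ) (fun e he => by
    simpa using hc e (mem_inter.1 he).1) 0 h0 x hx).1 hB0
  have := mem_Icc.1 (mem_powerset.1 hB hxB)
  omega

end Scales

end Renormalization

/-- phase transition for the 1d long-range Ising model with `1 < α ≤ 2`:
the plus and minus finite-volume magnetizations are uniformly separated at low
temperature. -/
theorem phase_transition (α : ℝ) (hα1 : 1 < α) (hα2 : α ≤ 2)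
    (ε : ℝ) (hε0 : 0 < ε) (hε1 : ε < 1) :
    ∃ β₀ : ℝ, 0 < β₀ ∧ ∀ β : ℝ, β₀ ≤ β → ∀ L : ℕ,
      1 - ε ≤ avgP α β L ∧ avgM α β L ≤ -(1 - ε) := by
  have hlim : Filter.Tendsto (fun β : ℝ => Real.exp (-β)) Filter.atTop (nhds 0) :=
    Real.tendsto_exp_neg_atTop_nhds_zero
  have h1 : ∀ᶠ β : ℝ in Filter.atTop, Real.exp (-β) ≤ ε / 64 ^ 5 :=
    hlim.eventually_le_const (by positivity)
  have h2 : ∀ᶠ β : ℝ in Filter.atTop, Real.exp (-(β / 40)) ≤ 1 / 64 :=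
    (hlim.comp (Filter.tendsto_id.atTop_div_const (by norm_num))).eventually_le_const
      (by norm_num)
  obtain ⟨β₀, hβ₀⟩ := Filter.eventually_atTop.1 (h1.and h2)
  refine ⟨max β₀ 1, by positivity, fun β hβ L => ?_⟩
  have hβ0 : 0 ≤ β := le_trans (by positivity) hβ
  obtain ⟨hβ1, hβ2⟩ := hβ₀ β (le_trans (le_max_left _ _) hβ)
  have key : 1 - ε ≤ avgP α β L := by
    refine le_avgP_of_bernP hα1 hβ0 L (edgesIn 0 (2 * halfLen (L + 1))) fun F hF => ?_
    rw [bernP_not]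
    have h3 := bernP_not_goodAtZero_le (openProb_nonneg hβ0) (openProb_le_one α β) hβ0
      (fun e he => one_sub_openProb_le hα2 hβ0 he) hε0 hε1.le hβ1 hβ2 (L + 1) F hF
    have h4 : ε * (1 - 1 / 4 ^ (L + 1 + 5)) ≤ ε :=
      mul_le_of_le_one_right hε0.le (sub_le_self 1 (by positivity))
    have hK : (L : ℝ) + 1 < density (L + 1) * (2 * halfLen (L + 1) : ℕ) := by
      have h5 := le_density (L + 1)
      have h6 : ((L + 1 : ℕ) : ℝ) < halfLen (L + 1) := by exact_mod_cast lt_halfLen (L + 1)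
      push_cast at h6 ⊢
      nlinarith
    have h7 := bernP_mono (openProb_nonneg hβ0) (openProb_le_one α β) (F := F)
      (Q := fun ω => ¬ PlusAtZero L ω)
      (R := fun ω => ¬ GoodAtZero (density (L + 1)) (2 * halfLen (L + 1)) ω)
      fun ω _ hn hg => hn (hg.plusAtZero hK)
    linarith
  exact ⟨key, by rw [avgM_eq_neg]; linarith⟩
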